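/- arXiv:2204.01402 — 2 statements merged into one kernel-verified Lean document; each statement's English description precedes it below -/
import Mathlib

section
/- Let g : ℝ^{d+1} → ℝ be a measurable function. Then g is Lebesgue-integrable on Δ_{d+1} if and only if the function (t, b) ↦ g(q(t,b))·(1−t)^d is Lebesgue-integrable on [0,1] × Δ_d. (Here (1−t)^d = |det Dq(t,b)|, so this expresses that a measurable top-degree differential form on Δ_{d+1} is integrable if and only if its pullback along q is integrable on [0,1] × Δ_d.) -/
open MeasureTheory Set

noncomputable section

/-- The standard `d`-simplex `Δ_d ⊆ ℝ^d`. -/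
def simplexSet (d : ℕ) : Set (Fin d → ℝ) :=
  {b | (∀ i, 0 ≤ b i) ∧ ∑ i, b i ≤ 1}

/-- The `i`-th face map `δ_i : Δ_d → Δ_{d+1}` (as a map of ambient spaces):
`δ_0 b = (1 - ∑ b, b)` and, for `i ≥ 1`, `δ_i` inserts a `0` at position `i - 1`. -/
def faceMap (d : ℕ) (i : Fin (d + 2)) (b : Fin d → ℝ) : Fin (d + 1) → ℝ :=
  if h : i = 0 then Fin.cons (1 - ∑ j, b j) b
  else Fin.insertNth (i.pred h) 0 b

/-- Continuous `d`-multilinear forms on `ℝ^N` (on finite-dimensional spaces every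
multilinear form is automatically continuous). -/
abbrev Form (N d : ℕ) : Type :=
  ContinuousMultilinearMap ℝ (fun _ : Fin d => (Fin N → ℝ)) ℝ

/-- A multilinear form is alternating if it vanishes whenever two arguments agree. -/
def IsAlternatingForm {N d : ℕ} (A : Form N d) : Prop :=
  ∀ v : Fin d → (Fin N → ℝ), ∀ i j, v i = v j → i ≠ j → A v = 0

/-- The pullback density `ω(σ(x))(Dσ(x)e_1, …, Dσ(x)e_d)` of a `d`-form `ω` along `σ`
at `x`, where `e_1, …, e_d` is the standard basis of `ℝ^d`. -/
def pullbackDensity {d N : ℕ} (σ : (Fin d → ℝ) → (Fin N → ℝ))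
    (ω : (Fin N → ℝ) → Form N d) (x : Fin d → ℝ) : ℝ :=
  ω (σ x) fun j => fderiv ℝ σ x (Pi.single j 1)

/-- A simplex `σ : Δ_d → ℝ^N` has finite volume if for every family of alternating
`d`-forms, continuous on `σ(Δ_d)`, the pullback density along `σ` is Lebesgue
integrable on the interior of `Δ_d`. -/
def FiniteVolume {d N : ℕ} (σ : (Fin d → ℝ) → (Fin N → ℝ)) : Prop :=
  ∀ ω : (Fin N → ℝ) → Form N d,
    (∀ y ∈ σ '' simplexSet d, IsAlternatingForm (ω y)) →
    ContinuousOn ω (σ '' simplexSet d) →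
    IntegrableOn (pullbackDensity σ ω) (interior (simplexSet d))

/-- The pullback density of the exterior derivative `dω` of a `d`-form `ω` along a
`(d+1)`-simplex `σ` at `x`:
`dω(y)(v_0, …, v_d) = ∑ i, (-1)^i (Dω(y)v_i)(v_0, …, v̂_i, …, v_d)` with `v_i = Dσ(x)e_i`. -/
def pullbackDensityD {d N : ℕ} (σ : (Fin (d + 1) → ℝ) → (Fin N → ℝ))
    (ω : (Fin N → ℝ) → Form N d) (x : Fin (d + 1) → ℝ) : ℝ :=
  ∑ i : Fin (d + 1), (-1 : ℝ) ^ (i : ℕ) *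
    fderiv ℝ ω (σ x) (fderiv ℝ σ x (Pi.single i 1))
      (fun j => fderiv ℝ σ x (Pi.single (i.succAbove j) 1))

/-- A `(d+1)`-simplex `σ` (C¹ on all open faces) satisfies Stokes if it and all of its
faces have finite volume, and Stokes' formula
`∫_{Δ_{d+1}} σ^*(dω) = ∑ i (-1)^i ∫_{Δ_d} (σ ∘ δ_i)^*(ω)` holds for every C¹ family of
alternating `d`-forms `ω` on an open neighbourhood of `σ(Δ_{d+1})`. -/
def SatisfiesStokes {d N : ℕ} (σ : (Fin (d + 1) → ℝ) → (Fin N → ℝ)) : Prop :=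
  FiniteVolume σ ∧ (∀ i : Fin (d + 2), FiniteVolume (σ ∘ faceMap d i)) ∧
  ∀ (V : Set (Fin N → ℝ)) (ω : (Fin N → ℝ) → Form N d),
    IsOpen V → σ '' simplexSet (d + 1) ⊆ V →
    (∀ y ∈ V, IsAlternatingForm (ω y)) → ContDiffOn ℝ 1 ω V →
    ∫ x in interior (simplexSet (d + 1)), pullbackDensityD σ ω x =
      ∑ i : Fin (d + 2), (-1 : ℝ) ^ (i : ℕ) *
        ∫ b in interior (simplexSet d), pullbackDensity (σ ∘ faceMap d i) ω b

/-- `σ : Δ_d → ℝ^N` is C¹ on all open faces: it is continuous on `Δ_d`, C¹ on the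
interior of `Δ_d`, and all iterated face composites `σ ∘ δ_{i_1} ∘ ⋯ ∘ δ_{i_k}` have
the same property. -/
def C1OnOpenFaces (N : ℕ) : ∀ d, ((Fin d → ℝ) → (Fin N → ℝ)) → Prop
  | 0, σ => ContinuousOn σ (simplexSet 0) ∧ ContDiffOn ℝ 1 σ (interior (simplexSet 0))
  | d + 1, σ => ContinuousOn σ (simplexSet (d + 1)) ∧
      ContDiffOn ℝ 1 σ (interior (simplexSet (d + 1))) ∧
      ∀ i : Fin (d + 2), C1OnOpenFaces N d (σ ∘ faceMap d i)

/-- `σ` and all of its iterated face composites have finite volume. -/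
def FiniteVolumeFaces (N : ℕ) : ∀ d, ((Fin d → ℝ) → (Fin N → ℝ)) → Prop
  | 0, σ => FiniteVolume σ
  | d + 1, σ => FiniteVolume σ ∧ ∀ i : Fin (d + 2), FiniteVolumeFaces N d (σ ∘ faceMap d i)

/-- `σ` and all of its iterated face composites satisfy Stokes
(a `0`-simplex satisfies Stokes by convention). -/
def SatisfiesStokesFaces (N : ℕ) : ∀ d, ((Fin d → ℝ) → (Fin N → ℝ)) → Prop
  | 0, _ => True
  | d + 1, σ => SatisfiesStokes σ ∧ ∀ i : Fin (d + 2), SatisfiesStokesFaces N d (σ ∘ faceMap d i)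

/-- The cone `σ̂ : Δ_{d+1} → ℝ^N` over a simplex `σ : Δ_d → ℝ^N`:
`σ̂(a_0, …, a_d) = A ⬝ σ(a_1/A, …, a_d/A)` with `A = ∑ a_i` if `A ≠ 0`, and `0` else. -/
def cone {d N : ℕ} (σ : (Fin d → ℝ) → (Fin N → ℝ)) (a : Fin (d + 1) → ℝ) : Fin N → ℝ :=
  if (∑ i, a i) = 0 then 0 else (∑ i, a i) • σ fun j => a j.succ / ∑ i, a i

/-- The map `q(t, b) = ((1-t)(1-∑ b), (1-t)b_1, …, (1-t)b_d)` from `[0,1] × Δ_d`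
onto `Δ_{d+1}`. -/
def qMap (d : ℕ) (p : ℝ × (Fin d → ℝ)) : Fin (d + 1) → ℝ :=
  Fin.cons ((1 - p.1) * (1 - ∑ j, p.2 j)) fun j => (1 - p.1) * p.2 j

/-- The inverse `i(a_0, …, a_d) = (1 - A, a_1/A, …, a_d/A)`, `A = ∑ a_i`, of `q`. -/
def iMap (d : ℕ) (a : Fin (d + 1) → ℝ) : ℝ × (Fin d → ℝ) :=
  (1 - ∑ i, a i, fun j => a j.succ / ∑ i, a i)

/-!
With `A (t, w) = (1 - ∑ w - t, w)` and `D (t, b) = (t, (1 - t) • b)` one has `q = A ∘ D`. The affine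
map `A` preserves Lebesgue measure, and `D` has block triangular derivative with diagonal blocks `1`
and `(1 - t) • 1`, hence Jacobian `(1 - t) ^ d`. Up to null sets the domain is `[0, 1) × Δ_d`, on
which `D` is injective and whose image under `q` is `Δ_{d+1}` without the origin.
-/

section BlockTriangular

variable {R M N : Type*} [CommRing R] [AddCommGroup M] [AddCommGroup N] [Module R M] [Module R N]
  [Module.Free R M] [Module.Finite R M] [Module.Free R N] [Module.Finite R N]

theorem det_comp_fst_prod_coprod (f : M →ₗ[R] M) (g : M →ₗ[R] N) (h : N →ₗ[R] N) :
    LinearMap.det ((f ∘ₗ LinearMap.fst R M N).prod (g.coprod h)) =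
      LinearMap.det f * LinearMap.det h := by
  classical
  let b := Module.Free.chooseBasis R M
  let b' := Module.Free.chooseBasis R N
  have toMatrix_eq : LinearMap.toMatrix (b.prod b') (b.prod b')
      ((f ∘ₗ LinearMap.fst R M N).prod (g.coprod h)) =
      Matrix.fromBlocks (LinearMap.toMatrix b b f) 0
        (LinearMap.toMatrix b b' g) (LinearMap.toMatrix b' b' h) := by
    ext (i | i) (j | j) <;> simp [LinearMap.toMatrix_apply]
  rw [← LinearMap.det_toMatrix (b.prod b'), toMatrix_eq, Matrix.det_fromBlocks_zero₁₂,
    LinearMap.det_toMatrix, LinearMap.det_toMatrix]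

end BlockTriangular

section FibreDilation

section Algebra

variable {𝕜 X E : Type*} [DivisionRing 𝕜] [AddCommGroup E] [Module 𝕜 E]

/-- The self-map `(x, v) ↦ (x, c x • v)` of `X × E`, dilating the fibre over `x` by `c x`. -/
def fibreDilation (c : X → 𝕜) (p : X × E) : X × E := (p.1, c p.1 • p.2)

theorem injOn_fibreDilation (c : X → 𝕜) :
    InjOn (fibreDilation c) {p : X × E | c p.1 ≠ 0} := by
  rintro ⟨x, v⟩ hx ⟨y, w⟩ - hxy
  obtain ⟨rfl, hvw⟩ := Prod.mk.inj hxy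
  exact congrArg (Prod.mk x) (smul_right_injective E hx hvw)

end Algebra

section Derivative

variable {𝕜 X E : Type*} [NontriviallyNormedField 𝕜] [NormedAddCommGroup X] [NormedSpace 𝕜 X]
  [NormedAddCommGroup E] [NormedSpace 𝕜 E]

/-- The derivative of `fibreDilation c` at `p`, when `c` has derivative `c'` at `p.1`. -/
def fibreDilationDeriv (c : X → 𝕜) (c' : X →L[𝕜] 𝕜) (p : X × E) : X × E →L[𝕜] X × E :=
  (ContinuousLinearMap.fst 𝕜 X E).prod
    ((c'.smulRight p.2).coprod (c p.1 • ContinuousLinearMap.id 𝕜 E))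

theorem hasFDerivAt_fibreDilation {c : X → 𝕜} {c' : X →L[𝕜] 𝕜} {p : X × E}
    (hc : HasFDerivAt c c' p.1) :
    HasFDerivAt (fibreDilation c) (fibreDilationDeriv c c' p) p := by
  refine (hasFDerivAt_fst.prodMk ((hc.comp p hasFDerivAt_fst).smul hasFDerivAt_snd)).congr_fderiv ?_
  ext v <;> simp [fibreDilationDeriv]

theorem det_fibreDilationDeriv [FiniteDimensional 𝕜 X] [FiniteDimensional 𝕜 E] (c : X → 𝕜)
    (c' : X →L[𝕜] 𝕜) (p : X × E) :
    (fibreDilationDeriv c c' p).det = c p.1 ^ Module.finrank 𝕜 E := by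
  have block_det := det_comp_fst_prod_coprod (LinearMap.id : X →ₗ[𝕜] X)
    (c'.smulRight p.2 : X →ₗ[𝕜] E) (c p.1 • LinearMap.id)
  rwa [LinearMap.det_smul, LinearMap.det_id, LinearMap.det_id, one_mul, mul_one] at block_det

end Derivative

theorem integrableOn_image_fibreDilation_iff {X E F : Type*}
    [NormedAddCommGroup X] [NormedSpace ℝ X] [FiniteDimensional ℝ X]
    [MeasurableSpace X] [BorelSpace X]
    [NormedAddCommGroup E] [NormedSpace ℝ E] [FiniteDimensional ℝ E]
    [MeasurableSpace E] [BorelSpace E] [NormedAddCommGroup F] [NormedSpace ℝ F]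
    (μ : Measure (X × E)) [μ.IsAddHaarMeasure]
    {c : X → ℝ} {s : Set (X × E)} (hs : MeasurableSet s)
    (hc : ∀ p ∈ s, DifferentiableAt ℝ c p.1) (hc₀ : ∀ p ∈ s, c p.1 ≠ 0) (g : X × E → F) :
    IntegrableOn g (fibreDilation c '' s) μ ↔
      IntegrableOn (fun p => |c p.1| ^ Module.finrank ℝ E • g (fibreDilation c p)) s μ := by
  simpa only [det_fibreDilationDeriv, abs_pow] using
    integrableOn_image_iff_integrableOn_abs_det_fderiv_smul μ hs
      (fun p hp => (hasFDerivAt_fibreDilation (hc p hp).hasFDerivAt).hasFDerivWithinAt)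
      ((injOn_fibreDilation c).mono hc₀) g

end FibreDilation

theorem measurePreserving_fibrewise_sub_left {G Y : Type*} [AddGroup G] [MeasurableSpace G]
    [MeasurableAdd₂ G] [MeasurableNeg G] [MeasurableSpace Y] (μ : Measure G) [SFinite μ]
    [μ.IsNegInvariant] [μ.IsAddLeftInvariant] (ν : Measure Y) [SFinite ν]
    {f : Y → G} (hf : Measurable f) :
    MeasurePreserving (fun p : G × Y => (f p.2 - p.1, p.2)) (μ.prod ν) (μ.prod ν) := by
  have skew : MeasurePreserving (fun p : Y × G => (p.1, f p.1 - p.2)) (ν.prod μ) (ν.prod μ) :=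
    (MeasurePreserving.id ν).skew_product (by unfold Function.uncurry; fun_prop)
      (ae_of_all ν fun y => (μ.measurePreserving_sub_left (f y)).map_eq)
  exact (Measure.measurePreserving_swap.comp skew).comp Measure.measurePreserving_swap

/-- The affine map `(t, w) ↦ (1 - ∑ w - t, w_1, …, w_d)` from `ℝ × ℝ^d` to `ℝ^{d+1}`; its entry at
`0` is the one making the sum of all entries equal to `1 - t`. -/
def consDeficit (d : ℕ) (p : ℝ × (Fin d → ℝ)) : Fin (d + 1) → ℝ :=
  Fin.cons (1 - ∑ j, p.2 j - p.1) p.2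

theorem measurePreserving_consDeficit (d : ℕ) : MeasurePreserving (consDeficit d) := by
  have reflect : MeasurePreserving fun p : ℝ × (Fin d → ℝ) => (1 - ∑ j, p.2 j - p.1, p.2) :=
    measurePreserving_fibrewise_sub_left volume volume (f := fun w : Fin d → ℝ => 1 - ∑ j, w j)
      (by fun_prop)
  convert (volume_preserving_piFinSuccAbove (fun _ : Fin (d + 1) => ℝ) 0).symm.comp reflect
  ext p
  simp [consDeficit]

theorem injective_consDeficit (d : ℕ) : Function.Injective (consDeficit d) := by
  rintro ⟨t, v⟩ ⟨u, w⟩ h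
  obtain ⟨htu, rfl⟩ := Fin.cons_inj.1 h
  exact congrArg (Prod.mk · v) (sub_right_injective htu)

theorem measurableEmbedding_consDeficit (d : ℕ) : MeasurableEmbedding (consDeficit d) :=
  (measurePreserving_consDeficit d).measurable.measurableEmbedding (injective_consDeficit d)

theorem qMap_eq_consDeficit_comp_fibreDilation (d : ℕ) :
    qMap d = consDeficit d ∘ fibreDilation fun t => 1 - t := by
  ext p i
  refine Fin.cases ?_ (fun j => rfl) i
  simp only [qMap, consDeficit, fibreDilation, Function.comp_apply, Fin.cons_zero, Pi.smul_apply,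
    smul_eq_mul, ← Finset.mul_sum]
  ring

theorem integrableOn_image_qMap_iff {F : Type*} [NormedAddCommGroup F] [NormedSpace ℝ F] {d : ℕ}
    {s : Set (ℝ × (Fin d → ℝ))} (hs : MeasurableSet s) (hs₁ : ∀ p ∈ s, p.1 ≠ 1)
    (g : (Fin (d + 1) → ℝ) → F) :
    IntegrableOn g (qMap d '' s) ↔ IntegrableOn (fun p => |1 - p.1| ^ d • g (qMap d p)) s := by
  have volume_isAddHaar : (volume : Measure (ℝ × (Fin d → ℝ))).IsAddHaarMeasure :=
    Measure.prod.instIsAddHaarMeasure volume volume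
  rw [qMap_eq_consDeficit_comp_fibreDilation, image_comp,
    (measurePreserving_consDeficit d).integrableOn_image (measurableEmbedding_consDeficit d),
    integrableOn_image_fibreDilation_iff volume hs (fun p _ => by fun_prop)
      (fun p hp => sub_ne_zero.2 (hs₁ p hp).symm), Module.finrank_fin_fun]
  rfl

theorem measurableSet_simplexSet (d : ℕ) : MeasurableSet (simplexSet d) := by
  unfold simplexSet
  measurability

theorem sum_qMap (d : ℕ) (p : ℝ × (Fin d → ℝ)) : ∑ i, qMap d p i = 1 - p.1 := by
  simp only [qMap, Fin.sum_univ_succ, Fin.cons_zero, Fin.cons_succ, ← Finset.mul_sum]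
  ring

theorem qMap_iMap {d : ℕ} {a : Fin (d + 1) → ℝ} (ha : ∑ i, a i ≠ 0) : qMap d (iMap d a) = a := by
  ext i
  refine Fin.cases ?_ (fun j => ?_) i
  · simp only [qMap, iMap, Fin.cons_zero, sub_sub_cancel, ← Finset.sum_div]
    rw [mul_sub, mul_one, mul_div_cancel₀ _ ha, Fin.sum_univ_succ, add_sub_cancel_right]
  · simp only [qMap, iMap, Fin.cons_succ, sub_sub_cancel, mul_div_cancel₀ _ ha]

theorem qMap_mem_simplexSet {d : ℕ} {p : ℝ × (Fin d → ℝ)} (hp : p ∈ Icc (0 : ℝ) 1 ×ˢ simplexSet d) :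
    qMap d p ∈ simplexSet (d + 1) := by
  obtain ⟨⟨ht₀, ht₁⟩, hb, hb_sum⟩ := hp
  refine ⟨Fin.cases ?_ fun j => ?_, (sum_qMap d p).trans_le (sub_le_self 1 ht₀)⟩
  · exact mul_nonneg (sub_nonneg.2 ht₁) (sub_nonneg.2 hb_sum)
  · exact mul_nonneg (sub_nonneg.2 ht₁) (hb j)

theorem iMap_mem_prod_simplexSet {d : ℕ} {a : Fin (d + 1) → ℝ} (ha : a ∈ simplexSet (d + 1))
    (ha₀ : 0 < ∑ i, a i) : iMap d a ∈ Ico (0 : ℝ) 1 ×ˢ simplexSet d := by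
  obtain ⟨ha_nonneg, ha_sum⟩ := ha
  refine ⟨⟨sub_nonneg.2 ha_sum, sub_lt_self 1 ha₀⟩,
    fun j => div_nonneg (ha_nonneg j.succ) ha₀.le, ?_⟩
  simp only [iMap, ← Finset.sum_div]
  rw [div_le_one ha₀, Fin.sum_univ_succ]
  exact le_add_of_nonneg_left (ha_nonneg 0)

theorem image_qMap_Ico_prod_simplexSet (d : ℕ) :
    qMap d '' (Ico (0 : ℝ) 1 ×ˢ simplexSet d) = simplexSet (d + 1) \ {0} := by
  ext a
  constructor
  · rintro ⟨p, hp, rfl⟩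
    refine ⟨qMap_mem_simplexSet (prod_mono_left Ico_subset_Icc_self hp), fun hq => ?_⟩
    have h_sum : (0 : ℝ) = 1 - p.1 := by simpa [mem_singleton_iff.1 hq] using sum_qMap d p
    linarith [hp.1.2]
  · rintro ⟨ha, ha₀⟩
    have h_sum : 0 < ∑ i, a i := Fintype.sum_pos (lt_of_le_of_ne ha.1 (Ne.symm ha₀))
    exact ⟨iMap d a, iMap_mem_prod_simplexSet ha h_sum, qMap_iMap h_sum.ne'⟩

theorem integrableOn_simplex_iff_qMap_pullback_general {F : Type*} [NormedAddCommGroup F]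
    [NormedSpace ℝ F] (d : ℕ) (g : (Fin (d + 1) → ℝ) → F) :
    IntegrableOn g (simplexSet (d + 1)) ↔
      IntegrableOn (fun p : ℝ × (Fin d → ℝ) => (1 - p.1) ^ d • g (qMap d p))
        (Icc (0 : ℝ) 1 ×ˢ simplexSet d) := by
  have simplex_ae : (simplexSet (d + 1) \ {0} : Set _) =ᵐ[volume] simplexSet (d + 1) :=
    sdiff_null_ae_eq_self (measure_singleton 0)
  have prism_ae : (Ico (0 : ℝ) 1 ×ˢ simplexSet d : Set (ℝ × (Fin d → ℝ))) =ᵐ[volume]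
      Icc (0 : ℝ) 1 ×ˢ simplexSet d :=
    Measure.set_prod_ae_eq Ico_ae_eq_Icc (ae_eq_refl _)
  have prism_meas : MeasurableSet (Ico (0 : ℝ) 1 ×ˢ simplexSet d) :=
    measurableSet_Ico.prod (measurableSet_simplexSet d)
  rw [← integrableOn_congr_set_ae simplex_ae, ← integrableOn_congr_set_ae prism_ae,
    ← image_qMap_Ico_prod_simplexSet, integrableOn_image_qMap_iff prism_meas fun p hp => hp.1.2.ne]
  refine integrableOn_congr_fun (fun p hp => ?_) prism_meas
  simp only [abs_of_pos (sub_pos.2 hp.1.2)]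

/-- **Lemma 2.4.** A measurable function `g` on `ℝ^{d+1}` is Lebesgue-integrable on
`Δ_{d+1}` if and only if `(t,b) ↦ g(q(t,b))·(1-t)^d` (the pullback along `q` of the
top-degree form with density `g`, `(1-t)^d = |det Dq(t,b)|`) is Lebesgue-integrable
on `[0,1] × Δ_d`. -/
theorem integrableOn_simplex_iff_qMap_pullback (d : ℕ) (g : (Fin (d + 1) → ℝ) → ℝ)
    (hg : Measurable g) :
    IntegrableOn g (simplexSet (d + 1)) ↔
    IntegrableOn (fun p : ℝ × (Fin d → ℝ) => g (qMap d p) * (1 - p.1) ^ d)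
      (Set.Icc (0 : ℝ) 1 ×ˢ simplexSet d) := by
  simpa only [smul_eq_mul, mul_comm] using integrableOn_simplex_iff_qMap_pullback_general d g

end
end

section
/- Let σ : Δ_d → ℝ^N be continuous, differentiable at every interior point of Δ_d, and of finite volume, and let ℓ : ℝ^d → ℝ^d be an injective affine map with ℓ(Δ_d) ⊆ Δ_d. Then σ ∘ ℓ : Δ_d → ℝ^N is continuous, differentiable at every interior point of Δ_d, and has finite volume. -/
open MeasureTheory Set

noncomputable section

/-! The compact image of `σ ∘ ℓ` carries the given form `ω`; Tietze's theorem extends `ω` to all of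
`ℝ^N`, so finite volume of `σ` makes its pullback along `σ` integrable over `ℓ (interior Δ_d)`.
Pulling an alternating form back along `Dℓ` multiplies it by `det Dℓ`, whereas the change of
variables formula produces `|det Dℓ|`; the two differ by a bounded factor. -/

lemma alternatingMap_comp_basis {R M ι : Type*} [CommRing R] [AddCommGroup M] [Module R M]
    [Finite ι] (f : M [⋀^ι]→ₗ[R] R) (b : Module.Basis ι R M) (L : M →ₗ[R] M) :
    f (L ∘ b) = LinearMap.det L * f b := by
  classical
  have := Fintype.ofFinite ι
  calc f (L ∘ b) = (f b • b.det) (L ∘ b) := congrArg (· (L ∘ b)) (f.eq_smul_basis_det b)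
    _ = LinearMap.det L * f b := by
      rw [AlternatingMap.smul_apply, b.det_comp, b.det_self, mul_one, smul_eq_mul, mul_comm]

instance finiteDimensional_continuousAlternatingMap {𝕜 V W ι : Type*} [Field 𝕜]
    [TopologicalSpace 𝕜] [AddCommGroup V] [Module 𝕜 V] [TopologicalSpace V]
    [FiniteDimensional 𝕜 V] [AddCommGroup W] [Module 𝕜 W] [TopologicalSpace W]
    [IsTopologicalAddGroup W] [ContinuousConstSMul 𝕜 W] [FiniteDimensional 𝕜 W] [Finite ι] :
    FiniteDimensional 𝕜 (V [⋀^ι]→L[𝕜] W) :=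
  .of_injective (ContinuousMultilinearMap.toMultilinearMapLinear ∘ₗ
      ContinuousAlternatingMap.toContinuousMultilinearMapLinear (R := 𝕜))
    (ContinuousMultilinearMap.toMultilinearMap_injective.comp
      ContinuousAlternatingMap.toContinuousMultilinearMap_injective)

lemma isOpenMap_affineMap_of_injective {𝕜 E : Type*} [NontriviallyNormedField 𝕜] [CompleteSpace 𝕜]
    [AddCommGroup E] [Module 𝕜 E] [TopologicalSpace E] [IsTopologicalAddGroup E]
    [ContinuousSMul 𝕜 E] [T2Space E] [FiniteDimensional 𝕜 E] {ℓ : E →ᵃ[𝕜] E}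
    (hℓ : Function.Injective ℓ) : IsOpenMap ℓ := by
  have hsurj : Function.Surjective ℓ.linear :=
    LinearMap.surjective_of_injective (ℓ.linear_injective_iff.2 hℓ)
  exact AffineMap.isOpenMap_linear_iff.1 (ℓ.linear.isOpenMap_of_finiteDimensional hsurj)

section ChangeOfVariables

variable {F : Type*} [NormedAddCommGroup F] [NormedSpace ℝ F]

lemma integrable_smul_of_integrable_abs_smul {α : Type*} [MeasurableSpace α] {μ : Measure α}
    {c : α → ℝ} {f : α → F} (hc : AEMeasurable c μ)
    (hf : Integrable (fun x => |c x| • f x) μ) : Integrable (fun x => c x • f x) μ := by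
  have hsign : AEStronglyMeasurable (fun x => c x / |c x|) μ :=
    (hc.div hc.abs).aestronglyMeasurable
  have hsign_le (x : α) : ‖c x / |c x|‖ ≤ 1 := by
    rw [Real.norm_eq_abs, abs_div, abs_abs]
    exact div_self_le_one _
  refine (hf.bdd_smul 1 hsign (.of_forall hsign_le)).congr (.of_forall fun x => ?_)
  change (c x / |c x|) • |c x| • f x = c x • f x
  rw [smul_smul, div_mul_cancel_of_imp abs_eq_zero.1]

lemma integrableOn_det_fderiv_smul_of_integrableOn_image {E : Type*} [NormedAddCommGroup E]
    [NormedSpace ℝ E] [FiniteDimensional ℝ E] [MeasurableSpace E] [BorelSpace E] {μ : Measure E}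
    [μ.IsAddHaarMeasure] {s : Set E} {g : E → E} {g' : E → E →L[ℝ] E} {f : E → F}
    (hs : MeasurableSet s) (hg : ∀ x ∈ s, HasFDerivWithinAt g (g' x) s x) (hinj : InjOn g s)
    (hf : IntegrableOn f (g '' s) μ) :
    IntegrableOn (fun x => (g' x).det • f (g x)) s μ := by
  have hdet : AEMeasurable (fun x => (g' x).det) (μ.restrict s) :=
    ContinuousLinearMap.continuous_det.measurable.comp_aemeasurable
      (aemeasurable_fderivWithin μ hs hg)
  exact integrable_smul_of_integrable_abs_smul hdet
    ((integrableOn_image_iff_integrableOn_abs_det_fderiv_smul μ hs hg hinj f).1 hf)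

end ChangeOfVariables

lemma isClosed_simplexSet (d : ℕ) : IsClosed (simplexSet d) := by
  simp only [simplexSet, ofPred_and, ofPred_forall]
  exact (isClosed_iInter fun i => isClosed_le (by fun_prop) (by fun_prop)).inter
    (isClosed_le (by fun_prop) (by fun_prop))

lemma simplexSet_subset_Icc (d : ℕ) : simplexSet d ⊆ Icc 0 1 := fun _ ⟨hnonneg, hsum⟩ =>
  ⟨hnonneg, fun i =>
    (Finset.single_le_sum (fun j _ => hnonneg j) (Finset.mem_univ i)).trans hsum⟩

lemma isCompact_simplexSet (d : ℕ) : IsCompact (simplexSet d) :=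
  isCompact_Icc.of_isClosed_subset (isClosed_simplexSet d) (simplexSet_subset_Icc d)

/-- An alternating form in the sense of `IsAlternatingForm`, bundled as a continuous alternating map
so that Mathlib's topology and determinant theory apply to it. -/
def IsAlternatingForm.toContinuousAlternatingMap {N d : ℕ} {A : Form N d}
    (hA : IsAlternatingForm A) : (Fin N → ℝ) [⋀^Fin d]→L[ℝ] ℝ :=
  { A with map_eq_zero_of_eq' := hA }

lemma exists_continuousMap_alternating_eqOn {X : Type*} [TopologicalSpace X] [NormalSpace X]
    {N d : ℕ} {K : Set X} (hK : IsClosed K) {ω : X → Form N d}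
    (halt : ∀ y ∈ K, IsAlternatingForm (ω y)) (hω : ContinuousOn ω K) :
    ∃ η : C(X, (Fin N → ℝ) [⋀^Fin d]→L[ℝ] ℝ),
      EqOn (fun y => (η y).toContinuousMultilinearMap) ω K := by
  let ωK (y : K) : (Fin N → ℝ) [⋀^Fin d]→L[ℝ] ℝ := (halt y y.2).toContinuousAlternatingMap
  have hωK : Continuous ωK :=
    ContinuousAlternatingMap.isEmbedding_toContinuousMultilinearMap.continuous_iff.2
      (continuousOn_iff_continuous_domRestrict.1 hω)
  have : TietzeExtension ((Fin N → ℝ) [⋀^Fin d]→L[ℝ] ℝ) := .of_tvs ℝ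
  obtain ⟨η, hη⟩ := (⟨ωK, hωK⟩ : C(K, (Fin N → ℝ) [⋀^Fin d]→L[ℝ] ℝ)).exists_restrict_eq hK
  exact ⟨η, fun y hy => congrArg (·.toContinuousMultilinearMap) (DFunLike.congr_fun hη ⟨y, hy⟩)⟩

lemma IsAlternatingForm.apply_comp_single {N d : ℕ} {A : Form N d} (hA : IsAlternatingForm A)
    (T : (Fin d → ℝ) →L[ℝ] (Fin N → ℝ)) (L : (Fin d → ℝ) →L[ℝ] (Fin d → ℝ)) :
    A (fun j => T (L (Pi.single j 1))) = L.det * A fun j => T (Pi.single j 1) := by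
  let f : (Fin d → ℝ) [⋀^Fin d]→ₗ[ℝ] ℝ :=
    hA.toContinuousAlternatingMap.toAlternatingMap.compLinearMap T
  have hf (v : Fin d → Fin d → ℝ) : f v = A fun j => T (v j) := rfl
  simpa only [hf, Function.comp_apply, Pi.basisFun_apply] using!
    alternatingMap_comp_basis f (Pi.basisFun ℝ (Fin d)) L

section Reparametrisation

variable {d N : ℕ} {σ : (Fin d → ℝ) → (Fin N → ℝ)} {g : (Fin d → ℝ) → (Fin d → ℝ)}

lemma pullbackDensity_comp {ω : (Fin N → ℝ) → Form N d} {x : Fin d → ℝ}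
    (hω : IsAlternatingForm (ω (σ (g x)))) (hσ : DifferentiableAt ℝ σ (g x))
    (hg : DifferentiableAt ℝ g x) :
    pullbackDensity (σ ∘ g) ω x = (fderiv ℝ g x).det * pullbackDensity σ ω (g x) := by
  simp only [pullbackDensity, fderiv_comp x hσ hg]
  exact hω.apply_comp_single (fderiv ℝ σ (g x)) (fderiv ℝ g x)

theorem FiniteVolume.comp (hv : FiniteVolume σ)
    (hσ : DifferentiableOn ℝ σ (interior (simplexSet d)))
    (hg : DifferentiableOn ℝ g (interior (simplexSet d)))
    (hinj : InjOn g (interior (simplexSet d)))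
    (hmaps : MapsTo g (interior (simplexSet d)) (interior (simplexSet d)))
    (hc : ContinuousOn (σ ∘ g) (simplexSet d)) : FiniteVolume (σ ∘ g) := by
  intro ω halt hω
  have hK : IsClosed ((σ ∘ g) '' simplexSet d) :=
    ((isCompact_simplexSet d).image_of_continuousOn hc).isClosed
  obtain ⟨η, hη⟩ := exists_continuousMap_alternating_eqOn hK halt hω
  let η' (y : Fin N → ℝ) : Form N d := (η y).toContinuousMultilinearMap
  have hη'_alt (y : Fin N → ℝ) : IsAlternatingForm (η' y) := (η y).map_eq_zero_of_eq
  have hη'_cont : Continuous η' :=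
    ContinuousAlternatingMap.isEmbedding_toContinuousMultilinearMap.continuous.comp η.continuous
  have hpull : IntegrableOn (pullbackDensity σ η') (g '' interior (simplexSet d)) :=
    (hv η' (fun y _ => hη'_alt y) hη'_cont.continuousOn).mono_set hmaps.image_subset
  have hgx {x} (hx : x ∈ interior (simplexSet d)) : DifferentiableAt ℝ g x :=
    hg.differentiableAt (isOpen_interior.mem_nhds hx)
  refine (integrableOn_det_fderiv_smul_of_integrableOn_image measurableSet_interior
    (fun x hx => (hgx hx).hasFDerivAt.hasFDerivWithinAt) hinj hpull).congr_fun
    (fun x hx => ?_) measurableSet_interior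
  have hσx : DifferentiableAt ℝ σ (g x) :=
    hσ.differentiableAt (isOpen_interior.mem_nhds (hmaps hx))
  have hηω : η' (σ (g x)) = ω (σ (g x)) := hη (mem_image_of_mem _ (interior_subset hx))
  calc (fderiv ℝ g x).det • pullbackDensity σ η' (g x)
      = pullbackDensity (σ ∘ g) η' x := (pullbackDensity_comp (hη'_alt _) hσx (hgx hx)).symm
    _ = pullbackDensity (σ ∘ g) ω x := by
      simp only [pullbackDensity, Function.comp_apply, hηω]

end Reparametrisation

/-- Stability of finite volume under injective affine reparametrisations `ℓ` of `Δ_d`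
(applied to barycentric subdivision in the proof of Theorem 4.5): if `σ : Δ_d → ℝ^N` is
continuous, differentiable on the interior, and of finite volume, then so is `σ ∘ ℓ`. -/
theorem finiteVolume_comp_affine {d N : ℕ} (σ : (Fin d → ℝ) → (Fin N → ℝ))
    (ℓ : (Fin d → ℝ) →ᵃ[ℝ] (Fin d → ℝ)) (hinj : Function.Injective ℓ)
    (hmaps : ℓ '' simplexSet d ⊆ simplexSet d)
    (hc : ContinuousOn σ (simplexSet d))
    (hd : DifferentiableOn ℝ σ (interior (simplexSet d)))
    (hv : FiniteVolume σ) :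
    ContinuousOn (σ ∘ ℓ) (simplexSet d) ∧
    DifferentiableOn ℝ (σ ∘ ℓ) (interior (simplexSet d)) ∧
    FiniteVolume (σ ∘ ⇑ℓ) := by
  let ℓc : (Fin d → ℝ) →ᴬ[ℝ] (Fin d → ℝ) := ⟨ℓ, ℓ.continuous_of_finiteDimensional⟩
  have hℓ : Differentiable ℝ ℓ := ℓc.differentiable
  have hmapsTo : MapsTo ℓ (simplexSet d) (simplexSet d) := mapsTo_iff_image_subset.2 hmaps
  have hint : MapsTo ℓ (interior (simplexSet d)) (interior (simplexSet d)) :=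
    (isOpenMap_affineMap_of_injective hinj).mapsTo_interior hmapsTo
  have hcomp : ContinuousOn (σ ∘ ℓ) (simplexSet d) := hc.comp hℓ.continuous.continuousOn hmapsTo
  exact ⟨hcomp, hd.comp hℓ.differentiableOn hint,
    hv.comp hd hℓ.differentiableOn hinj.injOn hint hcomp⟩

end
end
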